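/- Let D be a (not necessarily commutative) division semiring with idempotent addition, and let f : ℤ_max →+* D be an injective semiring homomorphism whose range lies in the center of D. If the subgroup Z(f) := {w ∈ Dˣ : ∃ a : ℤ, (w : D) = f (trop a)} has finite index in Dˣ, then D is selective: for all x, y ∈ D, x + y = x or x + y = y. -/

import Mathlib

open Tropical

/-- The subgroup `Z(f)` of `Dˣ` consisting of units lying in the image under `f` of the
nonzero elements of `ℤ_max = Tropical (WithTop ℤ)`. -/
def tropUnitSubgroup {D : Type*} [DivisionSemiring D]
    (f : Tropical (WithTop ℤ) →+* D) : Subgroup Dˣ where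
  carrier := {w : Dˣ | ∃ a : ℤ, (w : D) = f (trop (a : WithTop ℤ))}
  one_mem' := ⟨0, by simp⟩
  mul_mem' := by
    rintro v w ⟨a, ha⟩ ⟨b, hb⟩
    refine ⟨a + b, ?_⟩
    rw [Units.val_mul, ha, hb, ← map_mul, ← Tropical.trop_add, ← WithTop.coe_add]
  inv_mem' := by
    rintro w ⟨a, ha⟩
    refine ⟨-a, Units.inv_eq_of_mul_eq_one_right ?_⟩
    have h1 : trop ((a : WithTop ℤ)) * trop (((-a : ℤ) : WithTop ℤ)) = 1 := by
      rw [← Tropical.trop_add, ← WithTop.coe_add, add_neg_cancel, WithTop.coe_zero,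
        Tropical.trop_zero]
    rw [ha, ← map_mul, h1, map_one]

/-!
For `n ≠ 0` put `s = 1 + x + ⋯ + x ^ (n - 1)`. Both `s` and `x * s` arise from the common part
`x + ⋯ + x ^ (n - 1)`, by adding `1` and `x ^ n` respectively. Hence, in the natural order
`a ≤ b ↔ a + b = b` of an idempotent semiring, a comparison of `x ^ n` with `1` yields one of
`x * s` with `s`, and cancelling `s` compares `x` with `1`. Modulo a subgroup of finite index every
unit has a power in the image of `ℤ_max`, which is totally ordered; comparing `x * y⁻¹` with `1`
then compares `x` with `y`.
-/

theorem mul_geom_sum_succ {R : Type*} [Semiring R] (x : R) (n : ℕ) :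
    x * ∑ i ∈ Finset.range (n + 1), x ^ i =
      x * ∑ i ∈ Finset.range n, x ^ i + x ^ (n + 1) := by
  rw [Finset.sum_range_succ, mul_add, pow_succ']

section IdemSemiring

variable {R : Type*} [IdemSemiring R]

theorem le_of_mul_le_mul_right_of_ne_zero [IsRightCancelMulZero R] {a b c : R} (hc : c ≠ 0)
    (h : a * c ≤ b * c) : a ≤ b := by
  rw [← add_eq_right_iff_le] at h ⊢
  exact mul_right_cancel₀ hc (by rw [add_mul, h])

theorem geom_sum_succ_ne_zero [Nontrivial R] (x : R) (n : ℕ) :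
    ∑ i ∈ Finset.range (n + 1), x ^ i ≠ 0 := by
  rw [geom_sum_succ]
  exact fun h => one_ne_zero (add_eq_zero.mp h).2

variable [Nontrivial R] [IsRightCancelMulZero R] {x : R} {n : ℕ}

theorem le_one_of_pow_le_one (hn : n ≠ 0) (h : x ^ n ≤ 1) : x ≤ 1 := by
  obtain ⟨m, rfl⟩ := Nat.exists_eq_succ_of_ne_zero hn
  apply le_of_mul_le_mul_right_of_ne_zero (geom_sum_succ_ne_zero x m)
  rw [one_mul, mul_geom_sum_succ, geom_sum_succ]
  gcongr

theorem one_le_of_one_le_pow (hn : n ≠ 0) (h : 1 ≤ x ^ n) : 1 ≤ x := by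
  obtain ⟨m, rfl⟩ := Nat.exists_eq_succ_of_ne_zero hn
  apply le_of_mul_le_mul_right_of_ne_zero (geom_sum_succ_ne_zero x m)
  rw [one_mul, mul_geom_sum_succ, geom_sum_succ]
  gcongr

end IdemSemiring

theorem add_one_eq_self_or_one_of_pow {R : Type*} [Semiring R] [Nontrivial R]
    [IsRightCancelMulZero R] (hidem : ∀ x : R, x + x = x) {x : R} {n : ℕ} (hn : n ≠ 0)
    (h : x ^ n + 1 = x ^ n ∨ x ^ n + 1 = 1) : x + 1 = x ∨ x + 1 = 1 := by
  let _ := IdemSemiring.ofSemiring hidem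
  rw [add_eq_left_iff_le, add_eq_right_iff_le] at h ⊢
  exact h.imp (one_le_of_one_le_pow hn) (le_one_of_pow_le_one hn)

theorem add_eq_left_or_right_of_add_one {D : Type*} [DivisionSemiring D]
    (h : ∀ x : D, x ≠ 0 → x + 1 = x ∨ x + 1 = 1) (x y : D) : x + y = x ∨ x + y = y := by
  rcases eq_or_ne x 0 with rfl | hx
  · exact .inr (zero_add y)
  rcases eq_or_ne y 0 with rfl | hy
  · exact .inl (add_zero x)
  have hxy : (x * y⁻¹ + 1) * y = x + y := by rw [add_mul, inv_mul_cancel_right₀ hy, one_mul]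
  refine (h (x * y⁻¹) (mul_ne_zero hx (inv_ne_zero hy))).imp (fun hself => ?_) (fun hone => ?_)
  · rw [← hxy, hself, inv_mul_cancel_right₀ hy]
  · rw [← hxy, hone, one_mul]

theorem tropical_add_eq_left_or_right {R : Type*} [LinearOrder R] (a b : Tropical R) :
    a + b = a ∨ a + b = b :=
  (le_total a b).imp (fun h => Tropical.add_eq_left h) (fun h => Tropical.add_eq_right h)

theorem exists_pow_eq_map_of_finiteIndex {D : Type*} [DivisionSemiring D]
    (f : Tropical (WithTop ℤ) →+* D) (hfin : (tropUnitSubgroup f).FiniteIndex) (u : Dˣ) :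
    ∃ n : ℕ, n ≠ 0 ∧ ∃ a : Tropical (WithTop ℤ), (u : D) ^ n = f a := by
  obtain ⟨n, hn, -, a, ha⟩ :=
    Subgroup.exists_pow_mem_of_index_ne_zero hfin.index_ne_zero u
  exact ⟨n, hn.ne', trop a, ha⟩

theorem finite_unit_index_selective_general {S D : Type*} [NonAssocSemiring S]
    [DivisionSemiring D] (hS : ∀ a b : S, a + b = a ∨ a + b = b) (f : S →+* D)
    (hpow : ∀ u : Dˣ, ∃ n : ℕ, n ≠ 0 ∧ ∃ a : S, (u : D) ^ n = f a) :
    ∀ x y : D, x + y = x ∨ x + y = y := by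
  have one_add_one : (1 : D) + 1 = 1 := by
    rw [← map_one f, ← map_add, or_self_iff.mp (hS 1 1)]
  have hidem (x : D) : x + x = x := by
    rw [← mul_one x, ← mul_add, one_add_one]
  refine add_eq_left_or_right_of_add_one fun x hx => ?_
  obtain ⟨n, hn, a, ha⟩ := hpow (Units.mk0 x hx)
  rw [Units.val_mk0] at ha
  apply add_one_eq_self_or_one_of_pow hidem hn
  rw [ha, ← map_one f, ← map_add]
  exact (hS a 1).imp (congrArg f) (congrArg f)

/-- Let `D` be a division semiring with idempotent addition and `f : ℤ_max →+* D` an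
injective semiring homomorphism whose range lies in the center of `D`.  If `Z(f)` has finite
index in `Dˣ`, then `D` is selective. -/
theorem finite_unit_index_selective {D : Type*} [DivisionSemiring D]
    (hidem : ∀ x : D, x + x = x)
    (f : Tropical (WithTop ℤ) →+* D) (hf : Function.Injective f)
    (hcentral : ∀ a : Tropical (WithTop ℤ), f a ∈ Set.center D)
    (hui : (tropUnitSubgroup f).FiniteIndex) :
    ∀ x y : D, x + y = x ∨ x + y = y :=
  finite_unit_index_selective_general tropical_add_eq_left_or_right f
    (exists_pow_eq_map_of_finiteIndex f hui)
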